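/- arXiv:math/0206148 — 2 statements merged into one kernel-verified Lean document; each statement's English description precedes it below -/
import Mathlib

section
/- For every n ∈ ℕ, every commutative ring k and every Q ∈ k, the free k-module with basis p_n, equipped with the k-bilinear product a·b = Q^{c(a,b)} (a∘b), is an associative unital k-algebra (the partition algebra P_n(Q)), whose unit is the identity partition with parts {i, i′} for i = 1,…,n. In particular (p_n, ∘) is a monoid with identity the identity partition. -/
attribute [local instance] Classical.propDecidable

namespace RamifiedPartition

/-- The two-row set `[n] ⊔ [n]′`. -/
abbrev Row2 (n : ℕ) := Sum (Fin n) (Fin n)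

/-- `p_n`: partitions (equivalence relations) of `[n] ⊔ [n]′`,
with `a ≤ b` meaning that `a` refines `b`. -/
abbrev PN (n : ℕ) := Setoid (Row2 n)

/-- The three-row set `[n] ⊔ [n]′ ⊔ [n]″`. -/
abbrev Row3 (n : ℕ) := Sum (Fin n) (Sum (Fin n) (Fin n))

variable {n : ℕ}

/-- Embedding of the two-row set as rows 1,2 of the three-row set. -/
def emb12 : Row2 n → Row3 n := Sum.elim Sum.inl (fun i => Sum.inr (Sum.inl i))

/-- Embedding of the two-row set as rows 2,3 of the three-row set. -/
def emb23 : Row2 n → Row3 n :=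
  Sum.elim (fun i => Sum.inr (Sum.inl i)) (fun i => Sum.inr (Sum.inr i))

/-- Embedding of the two-row set as rows 1,3 of the three-row set. -/
def emb13 : Row2 n → Row3 n := Sum.elim Sum.inl (fun i => Sum.inr (Sum.inr i))

/-- `D_u(a,b)`: the equivalence relation on the three-row set generated by `a`
placed on rows 1,2 and `b` placed on rows 2,3. -/
def Du (a b : PN n) : Setoid (Row3 n) :=
  Relation.EqvGen.setoid (fun x y =>
    (∃ u v : Row2 n, a.r u v ∧ x = emb12 u ∧ y = emb12 v) ∨
    (∃ u v : Row2 n, b.r u v ∧ x = emb23 u ∧ y = emb23 v))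

/-- The composite `a ∘ b`: the restriction of `D_u(a,b)` to rows 1,3
(relabelled as `[n] ⊔ [n]′`). -/
def comp (a b : PN n) : PN n := Setoid.comap emb13 (Du a b)

/-- `c(a,b)`: the number of classes of `D_u(a,b)` contained entirely in the
middle row `[n]′`. -/
noncomputable def cnum (a b : PN n) : ℕ :=
  Nat.card {C : Quotient (Du a b) //
    ∀ x : Row3 n, Quotient.mk (Du a b) x = C → ∃ i : Fin n, x = Sum.inr (Sum.inl i)}

/-- The identity partition of `[n] ⊔ [n]′`, with parts `{i, i′}` for `i = 1,…,n`. -/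
def oneP (n : ℕ) : PN n := Setoid.ker (Sum.elim id id)

end RamifiedPartition

namespace RamifiedPartition

variable {n : ℕ} {k : Type*} [CommRing k]

/-- The `k`-bilinear product on the free `k`-module with basis `p_n`, determined
on basis elements by `a · b = Q^{c(a,b)} (a ∘ b)`. -/
noncomputable def pmul (Q : k) (x y : PN n →₀ k) : PN n →₀ k :=
  x.sum fun a xa => y.sum fun b yb =>
    Finsupp.single (comp a b) (xa * yb * Q ^ cnum a b)

/-- The basis element corresponding to the identity partition. -/
noncomputable def pone (n : ℕ) (k : Type*) [CommRing k] : PN n →₀ k :=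
  Finsupp.single (oneP n) 1

/-!
For a finite set `κ` of colours, a partition `a ∈ p_n` acts on the free module spanned by the
colourings `[n] → κ` through the matrix whose `(p, q)` entry says whether colouring the top row by
`p` and the bottom row by `q` is constant on the parts of `a`. The entry of a product of two such
matrices counts the ways to colour the middle row, and only the classes of `D_u(a,b)` lying inside
the middle row have a free choice of colour, so `M a * M b = |κ| ^ c(a,b) • M (a ∘ b)`.

With at least two colours, `M a` determines `a`, and its entry at a constant colouring is `1`, so
even `|κ| ^ s • M a` determines both `s` and `a`. Associativity and unitality of matrix
multiplication therefore give at the same time the monoid laws for `∘` and the cocycle identity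
`c(a,b) + c(a∘b,c) = c(b,c) + c(a,b∘c)`, which is what associativity of the algebra requires.
-/

section Extensions

variable {X Y Z κ : Type*}

theorem card_fun_comp_eq [Finite Z] [Nonempty κ] {φ : X → Z} {g : X → κ} (hg : g.FactorsThrough φ) :
    Nat.card {F : Z → κ // F ∘ φ = g} = Nat.card κ ^ Nat.card {z // z ∉ Set.range φ} := by
  obtain ⟨G, rfl⟩ := (Function.factorsThrough_iff g).mp hg
  have comp_eq_iff (F : Z → κ) :
      F ∘ φ = G ∘ φ ↔ F ∘ (Subtype.val : Set.range φ → Z) = G ∘ Subtype.val := by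
    simp [funext_iff]
  rw [← Nat.card_fun]
  exact Nat.card_congr ((Equiv.subtypeEquivRight comp_eq_iff).trans
    (Equiv.subtypePreimage (· ∈ Set.range φ) (G ∘ Subtype.val)))

theorem card_fun_le_ker_comp_eq [Finite Y] [Nonempty κ] {s : Setoid Y} {e : X → Y} {g : X → κ}
    (hg : s.comap e ≤ Setoid.ker g) :
    Nat.card {f : Y → κ // s ≤ Setoid.ker f ∧ f ∘ e = g} =
      Nat.card κ ^ Nat.card {C : Quotient s // C ∉ Set.range (Quotient.mk s ∘ e)} := by
  have factors : g.FactorsThrough (Quotient.mk s ∘ e) := fun _ _ h => hg (Quotient.exact (s := s) h)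
  rw [← card_fun_comp_eq factors]
  exact Nat.card_congr <| (Equiv.subtypeSubtypeEquivSubtypeInter _ _).symm.trans <|
    (Setoid.liftEquiv s).subtypeEquiv fun _ => Iff.rfl

theorem setoid_le_of_forall_le_ker [Nontrivial κ] {r s : Setoid X}
    (h : ∀ f : X → κ, s ≤ Setoid.ker f → r ≤ Setoid.ker f) : r ≤ s := by
  intro x y hxy
  obtain ⟨c, d, hcd⟩ := exists_pair_ne κ
  let classColour : X → κ := fun z => if s x z then c else d
  have classColour_respects : s ≤ Setoid.ker classColour := fun u v huv => by
    have class_iff : s x u ↔ s x v := ⟨fun hu => s.trans hu huv, fun hv => s.trans hv (s.symm huv)⟩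
    simp [Setoid.ker_def, classColour, class_iff]
  have hxy_colour : classColour x = classColour y := h classColour classColour_respects hxy
  by_contra hn
  simp [classColour, hn, hcd] at hxy_colour

end Extensions

section Diagrams

theorem Du_le_iff {a b : PN n} {s : Setoid (Row3 n)} :
    Du a b ≤ s ↔ a ≤ s.comap emb12 ∧ b ≤ s.comap emb23 := by
  constructor
  · exact fun h => ⟨fun u v huv => h (.rel _ _ (.inl ⟨u, v, huv, rfl, rfl⟩)),
      fun u v huv => h (.rel _ _ (.inr ⟨u, v, huv, rfl, rfl⟩))⟩
  · rintro ⟨ha, hb⟩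
    refine Setoid.eqvGen_le ?_
    rintro _ _ (⟨u, v, huv, rfl, rfl⟩ | ⟨u, v, huv, rfl, rfl⟩)
    exacts [ha huv, hb huv]

theorem mem_range_emb13_iff {x : Row3 n} :
    x ∈ Set.range emb13 ↔ ¬∃ i : Fin n, x = Sum.inr (Sum.inl i) := by
  rcases x with i | i | i <;> simp [emb13]

theorem cnum_eq_card_notMem_range (a b : PN n) :
    cnum a b =
      Nat.card {C : Quotient (Du a b) // C ∉ Set.range (Quotient.mk (Du a b) ∘ emb13)} := by
  refine Nat.card_congr (Equiv.subtypeEquivRight fun C => ?_)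
  rw [Set.range_comp, Set.mem_image]
  simp only [mem_range_emb13_iff]
  grind

variable {κ : Type*}

theorem Du_le_ker_elim_iff {a b : PN n} {p q r : Fin n → κ} :
    Du a b ≤ Setoid.ker (Sum.elim p (Sum.elim q r)) ↔
      a ≤ Setoid.ker (Sum.elim p q) ∧ b ≤ Setoid.ker (Sum.elim q r) := by
  have comp_emb12 : Sum.elim p (Sum.elim q r) ∘ emb12 = Sum.elim p q := by
    ext (_ | _) <;> rfl
  have comp_emb23 : Sum.elim p (Sum.elim q r) ∘ emb23 = Sum.elim q r := by
    ext (_ | _) <;> rfl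
  have comap_ker (e : Row2 n → Row3 n) (f : Row3 n → κ) :
      (Setoid.ker f).comap e = Setoid.ker (f ∘ e) := rfl
  rw [Du_le_iff, comap_ker, comap_ker, comp_emb12, comp_emb23]

theorem elim_elim_comp_emb13 (p q r : Fin n → κ) :
    Sum.elim p (Sum.elim q r) ∘ emb13 = Sum.elim p r := by
  ext (_ | _) <;> rfl

theorem comp_le_ker_elim {a b : PN n} {p q r : Fin n → κ} (ha : a ≤ Setoid.ker (Sum.elim p q))
    (hb : b ≤ Setoid.ker (Sum.elim q r)) : comp a b ≤ Setoid.ker (Sum.elim p r) := by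
  rw [← elim_elim_comp_emb13 p q r]
  exact fun _ _ h => Du_le_ker_elim_iff.mpr ⟨ha, hb⟩ h

/-- The colourings of the three rows with prescribed outer rows, parametrised by the colouring of
the middle row. -/
def middleRowEquiv (p r : Fin n → κ) :
    (Fin n → κ) ≃ {f : Row3 n → κ // f ∘ emb13 = Sum.elim p r} where
  toFun q := ⟨Sum.elim p (Sum.elim q r), elim_elim_comp_emb13 p q r⟩
  invFun f i := f.1 (Sum.inr (Sum.inl i))
  left_inv _ := rfl
  right_inv := by
    rintro ⟨f, hf⟩
    ext (i | i | i)
    exacts [(congrFun hf (Sum.inl i)).symm, rfl, (congrFun hf (Sum.inr i)).symm]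

theorem card_middle_colourings [Nonempty κ] {a b : PN n} {p r : Fin n → κ}
    (h : comp a b ≤ Setoid.ker (Sum.elim p r)) :
    Nat.card {q : Fin n → κ // a ≤ Setoid.ker (Sum.elim p q) ∧ b ≤ Setoid.ker (Sum.elim q r)} =
      Nat.card κ ^ cnum a b := by
  rw [cnum_eq_card_notMem_range, ← card_fun_le_ker_comp_eq h]
  refine Nat.card_congr <|
    ((middleRowEquiv p r).subtypeEquiv fun _ => Du_le_ker_elim_iff.symm).trans <|
    (Equiv.subtypeSubtypeEquivSubtypeInter _ fun f => Du a b ≤ Setoid.ker f).trans <|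
    Equiv.subtypeEquivRight fun _ => and_comm

end Diagrams

section ColouringMatrix

variable (κ : Type*)

/-- The matrix by which the partition `a` acts on colourings of `[n]`, i.e. on the `n`-th tensor
power of the free module on the set `κ` of colours: the entry at `(p, q)` is `1` if colouring the
top row by `p` and the bottom row by `q` is constant on the parts of `a`, and `0` otherwise. -/
noncomputable def colouringMatrix (a : PN n) : Matrix (Fin n → κ) (Fin n → κ) ℕ :=
  Matrix.of fun p q => if a ≤ Setoid.ker (Sum.elim p q) then 1 else 0

variable {κ}

theorem colouringMatrix_apply (a : PN n) (p q : Fin n → κ) :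
    colouringMatrix κ a p q = if a ≤ Setoid.ker (Sum.elim p q) then 1 else 0 :=
  rfl

theorem colouringMatrix_const (a : PN n) (c : κ) :
    colouringMatrix κ a (fun _ => c) (fun _ => c) = 1 := by
  rw [colouringMatrix_apply, if_pos]
  rintro (_ | _) (_ | _) _ <;> rfl

theorem colouringMatrix_injective [Nontrivial κ] :
    Function.Injective (colouringMatrix κ : PN n → _) := by
  intro a b hab
  have le_ker_iff (f : Row2 n → κ) : a ≤ Setoid.ker f ↔ b ≤ Setoid.ker f := by
    have entry_eq := congrFun₂ hab (f ∘ Sum.inl) (f ∘ Sum.inr)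
    simp only [colouringMatrix_apply, Sum.elim_comp_inl_inr] at entry_eq
    split_ifs at entry_eq <;> tauto
  exact le_antisymm (setoid_le_of_forall_le_ker fun f => (le_ker_iff f).mpr)
    (setoid_le_of_forall_le_ker fun f => (le_ker_iff f).mp)

theorem pow_card_smul_colouringMatrix_inj [Finite κ] [Nontrivial κ] {a b : PN n} {s t : ℕ}
    (h : Nat.card κ ^ s • colouringMatrix κ a = Nat.card κ ^ t • colouringMatrix κ b) :
    s = t ∧ a = b := by
  obtain ⟨c⟩ := Nontrivial.to_nonempty (α := κ)
  have pow_eq : Nat.card κ ^ s = Nat.card κ ^ t := by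
    simpa [colouringMatrix_const] using congrFun₂ h (fun _ => c) (fun _ => c)
  refine ⟨Nat.pow_right_injective Finite.one_lt_card pow_eq, colouringMatrix_injective (κ := κ) ?_⟩
  rw [pow_eq] at h
  exact smul_right_injective _ (pow_ne_zero t Nat.card_pos.ne') h

theorem colouringMatrix_mul [Fintype κ] [Nonempty κ] (a b : PN n) :
    colouringMatrix κ a * colouringMatrix κ b =
      Nat.card κ ^ cnum a b • colouringMatrix κ (comp a b) := by
  ext p r
  have entry_eq_card : (colouringMatrix κ a * colouringMatrix κ b) p r =
      Nat.card {q : Fin n → κ //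
        a ≤ Setoid.ker (Sum.elim p q) ∧ b ≤ Setoid.ker (Sum.elim q r)} := by
    simp only [Matrix.mul_apply, colouringMatrix_apply, ite_zero_mul_ite_zero, mul_one,
      Finset.sum_boole, Nat.cast_id, Nat.card_eq_fintype_card, Fintype.card_subtype]
  rw [entry_eq_card, Matrix.smul_apply, colouringMatrix_apply]
  split_ifs with h
  · rw [card_middle_colourings h, smul_eq_mul, mul_one]
  · have : IsEmpty {q : Fin n → κ //
        a ≤ Setoid.ker (Sum.elim p q) ∧ b ≤ Setoid.ker (Sum.elim q r)} :=
      ⟨fun q => h (comp_le_ker_elim q.2.1 q.2.2)⟩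
    rw [Nat.card_of_isEmpty, smul_zero]

theorem oneP_le_ker_elim_iff {p q : Fin n → κ} :
    oneP n ≤ Setoid.ker (Sum.elim p q) ↔ p = q := by
  constructor
  · exact fun h => funext fun i => h (show oneP n (Sum.inl i) (Sum.inr i) from rfl)
  · rintro rfl u v huv
    have elim_eq (w : Row2 n) : Sum.elim p p w = p (Sum.elim id id w) := by
      rcases w with i | i <;> rfl
    rw [Setoid.ker_def, elim_eq, elim_eq]
    exact congrArg p huv

theorem colouringMatrix_oneP [DecidableEq (Fin n → κ)] : colouringMatrix κ (oneP n) = 1 := by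
  ext p q
  simp only [colouringMatrix_apply, oneP_le_ker_elim_iff, Matrix.one_apply]

end ColouringMatrix

theorem cnum_add_and_comp_assoc (a b c : PN n) :
    cnum a b + cnum (comp a b) c = cnum b c + cnum a (comp b c) ∧
      comp (comp a b) c = comp a (comp b c) := by
  apply pow_card_smul_colouringMatrix_inj (κ := Bool)
  have mul_assoc_eq := mul_assoc (colouringMatrix Bool a) (colouringMatrix Bool b)
    (colouringMatrix Bool c)
  simpa only [colouringMatrix_mul, smul_mul_assoc, mul_smul_comm, smul_smul, ← pow_add]
    using mul_assoc_eq

theorem cnum_and_comp_oneP_left (a : PN n) : cnum (oneP n) a = 0 ∧ comp (oneP n) a = a := by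
  apply pow_card_smul_colouringMatrix_inj (κ := Bool)
  rw [← colouringMatrix_mul, colouringMatrix_oneP, one_mul, pow_zero, one_smul]

theorem cnum_and_comp_oneP_right (a : PN n) : cnum a (oneP n) = 0 ∧ comp a (oneP n) = a := by
  apply pow_card_smul_colouringMatrix_inj (κ := Bool)
  rw [← colouringMatrix_mul, colouringMatrix_oneP, mul_one, pow_zero, one_smul]

section TwistedMul

variable {ι R : Type*} [CommSemiring R]

/-- The bilinear product on the free module with basis `ι` determined by
`a · b = w a b • (op a b)` on basis elements: the multiplication of a twisted semigroup algebra. -/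
noncomputable def twistedMul (op : ι → ι → ι) (w : ι → ι → R) :
    (ι →₀ R) →ₗ[R] (ι →₀ R) →ₗ[R] (ι →₀ R) :=
  Finsupp.linearCombination R fun a =>
    Finsupp.linearCombination R fun b => Finsupp.single (op a b) (w a b)

variable {op : ι → ι → ι} {w : ι → ι → R}

theorem twistedMul_single (a b : ι) (r s : R) :
    twistedMul op w (Finsupp.single a r) (Finsupp.single b s) =
      Finsupp.single (op a b) (r * s * w a b) := by
  simp only [twistedMul, Finsupp.linearCombination_single, LinearMap.smul_apply,
    Finsupp.smul_single, smul_eq_mul, mul_assoc]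

theorem twistedMul_assoc (hop : ∀ a b c, op (op a b) c = op a (op b c))
    (hw : ∀ a b c, w a b * w (op a b) c = w b c * w a (op b c)) (x y z : ι →₀ R) :
    twistedMul op w (twistedMul op w x y) z = twistedMul op w x (twistedMul op w y z) := by
  have trilinear_eq : (twistedMul op w).compr₂ (twistedMul op w) =
      (LinearMap.llcomp R _ _ _).compl₁₂ (twistedMul op w) (twistedMul op w) := by
    ext a b c : 6
    simp [twistedMul_single, hop, hw]
  exact LinearMap.congr_fun (LinearMap.congr_fun₂ trilinear_eq x y) z

theorem twistedMul_single_one_left {e : ι} (hop : ∀ a, op e a = a) (hw : ∀ a, w e a = 1)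
    (x : ι →₀ R) : twistedMul op w (Finsupp.single e 1) x = x := by
  have linear_eq : twistedMul op w (Finsupp.single e 1) = LinearMap.id := by
    ext a : 2
    simp [twistedMul_single, hop, hw]
  exact LinearMap.congr_fun linear_eq x

theorem twistedMul_single_one_right {e : ι} (hop : ∀ a, op a e = a) (hw : ∀ a, w a e = 1)
    (x : ι →₀ R) : twistedMul op w x (Finsupp.single e 1) = x := by
  have linear_eq : (twistedMul op w).flip (Finsupp.single e 1) = LinearMap.id := by
    ext a : 2
    simp [twistedMul_single, hop, hw]
  exact LinearMap.congr_fun linear_eq x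

end TwistedMul

theorem pmul_eq_twistedMul (Q : k) (x y : PN n →₀ k) :
    pmul Q x y = twistedMul comp (fun a b => Q ^ cnum a b) x y := by
  simp only [pmul, twistedMul, Finsupp.linearCombination_apply, Finsupp.sum, LinearMap.sum_apply,
    LinearMap.smul_apply, Finset.smul_sum, Finsupp.smul_single, smul_eq_mul, mul_assoc]

/-- the free `k`-module with basis `p_n`, with the bilinear product
`a·b = Q^{c(a,b)} (a∘b)`, is an associative unital `k`-algebra with unit the
identity partition; in particular `(p_n, ∘)` is a monoid with identity the
identity partition. -/
theorem partitionAlgebra_isAlgebra (n : ℕ) (k : Type*) [CommRing k] (Q : k) :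
    (∀ x y z : PN n →₀ k, pmul Q (pmul Q x y) z = pmul Q x (pmul Q y z)) ∧
    (∀ x : PN n →₀ k, pmul Q (pone n k) x = x) ∧
    (∀ x : PN n →₀ k, pmul Q x (pone n k) = x) ∧
    (∀ (r : k) (x y : PN n →₀ k), pmul Q (r • x) y = r • pmul Q x y) ∧
    (∀ (r : k) (x y : PN n →₀ k), pmul Q x (r • y) = r • pmul Q x y) ∧
    (∀ x y z : PN n →₀ k, pmul Q (x + y) z = pmul Q x z + pmul Q y z) ∧
    (∀ x y z : PN n →₀ k, pmul Q x (y + z) = pmul Q x y + pmul Q x z) ∧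
    (∀ a b c : PN n, comp (comp a b) c = comp a (comp b c)) ∧
    (∀ a : PN n, comp (oneP n) a = a) ∧
    (∀ a : PN n, comp a (oneP n) = a) := by
  have comp_assoc (a b c : PN n) : comp (comp a b) c = comp a (comp b c) :=
    (cnum_add_and_comp_assoc a b c).2
  have weight_cocycle (a b c : PN n) :
      Q ^ cnum a b * Q ^ cnum (comp a b) c = Q ^ cnum b c * Q ^ cnum a (comp b c) := by
    rw [← pow_add, ← pow_add, (cnum_add_and_comp_assoc a b c).1]
  have one_comp (a : PN n) : comp (oneP n) a = a := (cnum_and_comp_oneP_left a).2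
  have comp_one (a : PN n) : comp a (oneP n) = a := (cnum_and_comp_oneP_right a).2
  have weight_one_left (a : PN n) : Q ^ cnum (oneP n) a = 1 := by
    rw [(cnum_and_comp_oneP_left a).1, pow_zero]
  have weight_one_right (a : PN n) : Q ^ cnum a (oneP n) = 1 := by
    rw [(cnum_and_comp_oneP_right a).1, pow_zero]
  simp only [pmul_eq_twistedMul, pone]
  exact ⟨twistedMul_assoc comp_assoc weight_cocycle,
    twistedMul_single_one_left one_comp weight_one_left,
    twistedMul_single_one_right comp_one weight_one_right,
    LinearMap.map_smul₂ _, fun r x => map_smul _ r,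
    LinearMap.map_add₂ _, fun x => map_add _,
    comp_assoc, one_comp, comp_one⟩

end RamifiedPartition
end

section
/- The Gram matrix G_3 (a 12 × 12 matrix, since a 3-element set has exactly twelve 2-ramified partitions) has determinant det G_3 = Q₁¹² Q₂²⁰ (Q₁ − 2)(Q₂ − 2)(Q₁ − 1)⁷ (Q₂ − 1)⁷ in ℤ[Q₁,Q₂]. -/
attribute [local instance] Classical.propDecidable

namespace RamifiedGram

instance setoidFinite {α : Type*} [Finite α] : Finite (Setoid α) :=
  Finite.of_injective (fun s => s.r) (fun s t h => by cases s; cases t; cases h; rfl)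

/-- The 2-ramified partitions of `Fin n`: pairs of equivalence relations
`(a₁, a₂)` with `a₁ ≤ a₂` (`a₁` refines `a₂`). -/
def RamPart (n : ℕ) : Type := {p : Setoid (Fin n) × Setoid (Fin n) // p.1 ≤ p.2}

noncomputable instance (n : ℕ) : Fintype (RamPart n) := by
  unfold RamPart; exact Fintype.ofFinite _

/-- The Gram matrix `G_n` over `ℤ[Q₁,Q₂]` (with `Q₁ = X 0`, `Q₂ = X 1`):
the `(a,b)` entry is `Q₁^{k(a,b)} Q₂^{h(a,b)}` where `k(a,b)` is the number of
parts of the join `a₂ ∨ b₂` of the coarser components and `h(a,b)` is the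
number of parts of the join `a₁ ∨ b₁` of the finer components. -/
noncomputable def gram (n : ℕ) : Matrix (RamPart n) (RamPart n) (MvPolynomial (Fin 2) ℤ) :=
  fun a b =>
    MvPolynomial.X 0 ^ Nat.card (Quotient (a.1.2 ⊔ b.1.2)) *
    MvPolynomial.X 1 ^ Nat.card (Quotient (a.1.1 ⊔ b.1.1))

end RamifiedGram

namespace RamifiedGram

open MvPolynomial

/-!
Let `L` be a finite join-semilattice and `f a = ∑ c ≥ a, g c`. The matrix `f (a ⊔ b)` is `ζ D ζᵀ`,
where `ζ` is the zeta matrix of `L` and `D` is the diagonal matrix of `g`, so its determinant is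
`∏ c, g c`. The Gram matrix has this shape for the semilattice of ramified partitions.

For natural numbers `Q₁`, `Q₂` the number `Q₁ ^ |a₂| * Q₂ ^ |a₁|` counts the pairs of colourings
`φ`, `ψ` with `Q₁` and `Q₂` colours that are constant on the parts of `a₂` and `a₁` respectively,
that is, with `a ≤ (ker ψ ⊓ ker φ, ker φ)`. Hence `g c` counts the pairs with
`(ker ψ ⊓ ker φ, ker φ) = c`: `φ` gives different colours to the parts of `c₂`, and `ψ` gives
different colours to the parts of `c₁` inside each part of `c₂`. So `g c` is a product of falling
factorials, and for `n = 3` it remains to count parts.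
-/

section DetSup

variable {α R : Type*} [Fintype α] [DecidableEq α] [CommRing R]

theorem det_eq_prod_diag_of_not_le [PartialOrder α] {M : Matrix α α R}
    (hM : ∀ i j, ¬i ≤ j → M i j = 0) : M.det = ∏ i, M i i := by
  let : Fintype (LinearExtension α) := ‹Fintype α›
  let : DecidableEq (LinearExtension α) := ‹DecidableEq α›
  exact Matrix.det_of_isUpperTriangular (m := LinearExtension α) (M := M)
    fun i j hji => hM i j fun hij => (toLinearExtension.monotone hij).not_gt hji

theorem det_sup_eq_prod [SemilatticeSup α] [DecidableLE α] {f g : α → R}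
    (hfg : ∀ a, f a = ∑ c with a ≤ c, g c) :
    (Matrix.of fun a b => f (a ⊔ b)).det = ∏ c, g c := by
  let ζ : Matrix α α R := Matrix.of fun a c => if a ≤ c then 1 else 0
  have det_ζ : ζ.det = 1 := by
    rw [det_eq_prod_diag_of_not_le (M := ζ) fun _ _ hij => if_neg hij]
    exact Finset.prod_eq_one fun i _ => if_pos le_rfl
  have factor : (Matrix.of fun a b => f (a ⊔ b)) = ζ * Matrix.diagonal g * ζ.transpose := by
    ext a b
    rw [Matrix.mul_apply]
    simp only [ζ, Matrix.mul_diagonal, Matrix.transpose_apply, Matrix.of_apply,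
      hfg, sup_le_iff, Finset.sum_filter, ite_and, ite_mul, mul_ite, one_mul, zero_mul, mul_one,
      mul_zero]
    refine Finset.sum_congr rfl fun c _ => ?_
    split_ifs <;> rfl
  rw [factor, Matrix.det_mul, Matrix.det_mul, Matrix.det_transpose, det_ζ, Matrix.det_diagonal,
    one_mul, mul_one]

end DetSup

section Colourings

variable {α β γ : Type*}

/-- The number of parts of the restriction of the partition `c` to the subset `B`. -/
noncomputable def numPartsOn (c : Setoid α) (B : Set α) : ℕ :=
  Nat.card (Quotient (c.comap ((↑) : B → α)))

/-- Colourings with colour classes `c` are the injective colourings of the set of parts of `c`. -/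
def kerEqEquivEmbedding (c : Setoid α) : {φ : α → β // Setoid.ker φ = c} ≃ (Quotient c ↪ β) where
  toFun φ := ⟨Quotient.lift φ.1 fun _ _ h => φ.2.ge h, by
    rintro ⟨a⟩ ⟨b⟩ h
    exact Quotient.sound (φ.2.le h)⟩
  invFun e := ⟨fun a => e (Quotient.mk c a), by
    ext a b
    exact e.injective.eq_iff.trans Quotient.eq⟩
  left_inv _ := rfl
  right_inv e := by
    ext ⟨a⟩
    rfl

theorem card_ker_eq [Finite α] [Finite β] (c : Setoid α) :
    Nat.card {φ : α → β // Setoid.ker φ = c} =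
      (Nat.card β).descFactorial (Nat.card (Quotient c)) := by
  have := Fintype.ofFinite (Quotient c)
  have := Fintype.ofFinite β
  simp only [Nat.card_congr (kerEqEquivEmbedding c), Nat.card_eq_fintype_card,
    Fintype.card_embedding_eq]

/-- A function on `α` is a family of functions on the fibres of `π`. -/
def piFibreEquiv (π : α → γ) : (α → β) ≃ ∀ k, π ⁻¹' {k} → β where
  toFun ψ _ a := ψ a
  invFun F a := F (π a) ⟨a, rfl⟩
  left_inv _ := rfl
  right_inv F := by
    ext _ ⟨a, rfl⟩
    rfl

theorem ker_inf_ker_eq_iff {c : Setoid α} {π : α → γ} (hc : c ≤ Setoid.ker π) (ψ : α → β) :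
    Setoid.ker ψ ⊓ Setoid.ker π = c ↔
      ∀ k, Setoid.ker (piFibreEquiv π ψ k) = c.comap ((↑) : π ⁻¹' {k} → α) := by
  constructor
  · rintro rfl k
    ext ⟨a, ha⟩ ⟨b, hb⟩
    exact (and_iff_left (ha.trans hb.symm)).symm
  · intro h
    ext a b
    have iff_of_eq_fibre (hab : π a = π b) : ψ a = ψ b ↔ c a b :=
      Setoid.ext_iff.1 (h (π b)) ⟨a, hab⟩ ⟨b, rfl⟩
    exact ⟨fun hab => (iff_of_eq_fibre hab.2).1 hab.1,
      fun hab => ⟨(iff_of_eq_fibre (hc hab)).2 hab, hc hab⟩⟩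

theorem card_ker_inf_ker_eq [Finite α] [Finite β] [Fintype γ] {c : Setoid α} {π : α → γ}
    (hc : c ≤ Setoid.ker π) :
    Nat.card {ψ : α → β // Setoid.ker ψ ⊓ Setoid.ker π = c} =
      ∏ k, (Nat.card β).descFactorial (numPartsOn c (π ⁻¹' {k})) := by
  rw [Nat.card_congr (((piFibreEquiv π).subtypeEquiv (ker_inf_ker_eq_iff hc)).trans
    (Equiv.subtypePiEquivPi (p := fun k ψ => Setoid.ker ψ = c.comap ((↑) : π ⁻¹' {k} → α)))),
    Nat.card_pi]
  exact Finset.prod_congr rfl fun k _ => card_ker_eq _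

theorem card_subtype_and (p : α → Prop) (q : β → Prop) :
    Nat.card {x : α × β // p x.1 ∧ q x.2} = Nat.card {a // p a} * Nat.card {b // q b} := by
  rw [← Nat.card_prod]
  exact Nat.card_congr Equiv.subtypeProdEquivProd

theorem card_le_ker (c : Setoid α) [Finite α] :
    Nat.card {φ : α → β // c ≤ Setoid.ker φ} = Nat.card β ^ Nat.card (Quotient c) := by
  rw [Nat.card_congr (Setoid.liftEquiv c), Nat.card_fun]

end Colourings

section Parts

variable {α β κ : Type*}

theorem card_quotient_ker (u : α → β) : Nat.card (Quotient (Setoid.ker u)) = (Set.range u).ncard :=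
  Nat.card_congr (Setoid.quotientKerEquivRange u)

theorem numPartsOn_ker (u : α → β) (B : Set α) : numPartsOn (Setoid.ker u) B = (u '' B).ncard := by
  rw [Set.image_eq_range]
  exact card_quotient_ker fun a : B => u a

theorem prod_quotient_ker {M : Type*} [CommMonoid M] [Fintype κ] (v : α → κ)
    [Fintype (Quotient (Setoid.ker v))] {F : Set α → M} (hF : F ∅ = 1) :
    ∏ B : Quotient (Setoid.ker v), F (Quotient.mk _ ⁻¹' {B}) = ∏ k, F (v ⁻¹' {k}) := by
  refine Fintype.prod_of_injective (Setoid.kerLift v) (Setoid.kerLift_injective v) _ _ ?_ ?_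
  · intro k hk
    rw [Setoid.range_kerLift_eq_range] at hk
    rw [Set.preimage_singleton_eq_empty.2 hk, hF]
  · rintro ⟨b⟩
    exact congrArg F (Set.ext fun a => Quotient.eq)

end Parts

namespace RamPart

variable {n : ℕ}

/-- The finer component `a₁` of a ramified partition. -/
def fine (a : RamPart n) : Setoid (Fin n) := a.1.1

/-- The coarser component `a₂` of a ramified partition. -/
def coarse (a : RamPart n) : Setoid (Fin n) := a.1.2

theorem fine_le_coarse (a : RamPart n) : a.fine ≤ a.coarse := a.2

theorem ext_iff {a b : RamPart n} : a = b ↔ a.fine = b.fine ∧ a.coarse = b.coarse :=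
  Subtype.ext_iff.trans Prod.ext_iff

noncomputable instance : SemilatticeSup (RamPart n) :=
  Subtype.semilatticeSup fun _ _ => sup_le_sup

theorem le_iff {a b : RamPart n} : a ≤ b ↔ a.fine ≤ b.fine ∧ a.coarse ≤ b.coarse := Iff.rfl

end RamPart

section GramDeterminant

variable {n : ℕ} {β γ : Type*}

/-- The ramified partition determined by two colourings: the coarser component consists of the
colour classes of `φ`, and the finer one splits these by the colours of `ψ`. -/
def ramKer (ψ : Fin n → β) (φ : Fin n → γ) : RamPart n :=
  ⟨(Setoid.ker ψ ⊓ Setoid.ker φ, Setoid.ker φ), inf_le_right⟩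

theorem le_ramKer_iff {a : RamPart n} {ψ : Fin n → β} {φ : Fin n → γ} :
    a ≤ ramKer ψ φ ↔ a.fine ≤ Setoid.ker ψ ∧ a.coarse ≤ Setoid.ker φ :=
  RamPart.le_iff.trans ⟨fun h => ⟨h.1.trans inf_le_left, h.2⟩,
    fun h => ⟨le_inf h.1 (a.fine_le_coarse.trans h.2), h.2⟩⟩

theorem ramKer_eq_iff {c : RamPart n} {ψ : Fin n → β} {φ : Fin n → γ} :
    ramKer ψ φ = c ↔
      Setoid.ker ψ ⊓ Setoid.ker (Quotient.mk c.coarse) = c.fine ∧ Setoid.ker φ = c.coarse := by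
  have ker_mk : Setoid.ker (Quotient.mk c.coarse) = c.coarse := Setoid.ker_mk_eq _
  rw [ker_mk, RamPart.ext_iff]
  exact and_congr_left fun h => h ▸ Iff.rfl

/-- The falling-factorial weight of a ramified partition `c`. For natural numbers `x` and `y` it
counts the pairs of colourings `ψ`, `φ` with `y` and `x` colours such that `ramKer ψ φ = c`. -/
noncomputable def weight {R : Type*} [CommRing R] (x y : R) (c : RamPart n) : R :=
  (descPochhammer R (Nat.card (Quotient c.coarse))).eval x *
    ∏ B, (descPochhammer R (numPartsOn c.fine (Quotient.mk c.coarse ⁻¹' {B}))).eval y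

theorem map_weight {R S : Type*} [CommRing R] [CommRing S] (f : R →+* S) (x y : R)
    (c : RamPart n) : f (weight x y c) = weight (f x) (f y) c := by
  simp only [weight, descPochhammer_eval_eq_prod_range, map_mul, map_prod, map_sub, map_natCast]

theorem weight_natCast {R : Type*} [CommRing R] [Finite β] [Finite γ] (c : RamPart n) :
    weight (Nat.card γ : R) (Nat.card β : R) c =
      Nat.card {p : (Fin n → β) × (Fin n → γ) // ramKer p.1 p.2 = c} := by
  have hc : c.fine ≤ Setoid.ker (Quotient.mk c.coarse) :=
    c.fine_le_coarse.trans (Setoid.ker_mk_eq _).ge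
  have card_eq : Nat.card {p : (Fin n → β) × (Fin n → γ) // ramKer p.1 p.2 = c} =
      Nat.card {ψ : Fin n → β // Setoid.ker ψ ⊓ Setoid.ker (Quotient.mk c.coarse) = c.fine} *
        Nat.card {φ : Fin n → γ // Setoid.ker φ = c.coarse} := by
    simp only [ramKer_eq_iff]
    exact card_subtype_and (fun ψ => Setoid.ker ψ ⊓ _ = _) (Setoid.ker · = _)
  rw [card_eq, card_ker_eq, card_ker_inf_ker_eq hc, mul_comm]
  simp only [weight, descPochhammer_eval_eq_descFactorial, Nat.cast_mul, Nat.cast_prod]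

theorem sum_card_ramKer_eq [Finite β] [Finite γ] (a : RamPart n) :
    ∑ c with a ≤ c, Nat.card {p : (Fin n → β) × (Fin n → γ) // ramKer p.1 p.2 = c} =
      Nat.card γ ^ Nat.card (Quotient a.coarse) * Nat.card β ^ Nat.card (Quotient a.fine) :=
  calc
    _ = Nat.card {p : (Fin n → β) × (Fin n → γ) // a ≤ ramKer p.1 p.2} := by
      rw [← Nat.card_congr (Equiv.sigmaSubtypeFiberEquivSubtype
        (fun p : (Fin n → β) × (Fin n → γ) => ramKer p.1 p.2) fun _ => Iff.rfl), Nat.card_sigma]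
      exact Finset.sum_subtype _ (fun c => Finset.mem_filter_univ c) _
    _ = Nat.card {ψ : Fin n → β // a.fine ≤ Setoid.ker ψ} *
        Nat.card {φ : Fin n → γ // a.coarse ≤ Setoid.ker φ} := by
      simp only [le_ramKer_iff]
      exact card_subtype_and (_ ≤ Setoid.ker ·) (_ ≤ Setoid.ker ·)
    _ = _ := by rw [card_le_ker, card_le_ker, mul_comm]

theorem sum_weight (a : RamPart n) :
    ∑ c with a ≤ c, weight (X 0 : MvPolynomial (Fin 2) ℤ) (X 1) c =
      X 0 ^ Nat.card (Quotient a.coarse) * X 1 ^ Nat.card (Quotient a.fine) := by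
  refine funext_set (fun _ => Set.range ((↑) : ℕ → ℤ))
    (fun _ => Set.infinite_range_of_injective Nat.cast_injective) fun x hx => ?_
  obtain ⟨l, hl⟩ := hx 0 trivial
  obtain ⟨m, hm⟩ := hx 1 trivial
  have count := sum_card_ramKer_eq (β := Fin m) (γ := Fin l) a
  simp only [map_sum, map_weight, map_mul, map_pow, eval_X, ← hl, ← hm]
  rw [← Nat.card_fin l, ← Nat.card_fin m]
  simp only [weight_natCast]
  exact_mod_cast count

theorem det_gram (n : ℕ) :
    (gram n).det = ∏ c : RamPart n, weight (X 0 : MvPolynomial (Fin 2) ℤ) (X 1) c :=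
  det_sup_eq_prod fun a => (sum_weight a).symm

theorem weight_eq_of_ker {R κ : Type*} [CommRing R] [Fintype κ] {c : RamPart n} {u : Fin n → β}
    {v : Fin n → κ} (hu : c.fine = Setoid.ker u) (hv : c.coarse = Setoid.ker v) (x y : R) :
    weight x y c = (descPochhammer R (Set.range v).ncard).eval x *
      ∏ k, (descPochhammer R (u '' (v ⁻¹' {k})).ncard).eval y := by
  obtain ⟨⟨s, t⟩, hst⟩ := c
  obtain rfl : s = Setoid.ker u := hu
  obtain rfl : t = Setoid.ker v := hv
  simp only [weight, RamPart.fine, RamPart.coarse, card_quotient_ker, numPartsOn_ker]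
  congr 1
  exact prod_quotient_ker v (F := fun B => (descPochhammer R (u '' B).ncard).eval y) (by simp)

end GramDeterminant

section LeastRepresentatives

-- With low priority, so that `decide` below finds the computable instances first.
attribute [local instance 10] Classical.propDecidable

variable {α : Type*}

/-- The functions that send each element to the least element of its part in some partition of
`α`. They are a decidable encoding of the partitions of a finite linear order. -/
def LeastRep (α : Type*) [LE α] : Type _ := {f : α → α // ∀ i, f i ≤ i ∧ f (f i) = f i}

namespace LeastRep

theorem ker_injective [PartialOrder α] :
    Function.Injective fun f : LeastRep α => Setoid.ker f.1 := by
  have le_of_ker_eq {f g : LeastRep α} (h : Setoid.ker f.1 = Setoid.ker g.1) (i : α) :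
      g.1 i ≤ f.1 i :=
    calc g.1 i = g.1 (f.1 i) := (h.le (f.2 i).2).symm
      _ ≤ f.1 i := (g.2 _).1
  exact fun f g h => Subtype.ext <| funext fun i =>
    (le_of_ker_eq h.symm i).antisymm (le_of_ker_eq h i)

theorem ker_surjective [LinearOrder α] [WellFoundedLT α] :
    Function.Surjective fun f : LeastRep α => Setoid.ker f.1 := by
  intro s
  have nonempty (i : α) : {j | s i j}.Nonempty := ⟨i, s.refl' i⟩
  let least (i : α) : α := wellFounded_lt.min {j | s i j} (nonempty i)
  have rel_least (i : α) : s i (least i) := wellFounded_lt.min_mem _ (nonempty i)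
  have least_congr {i j : α} (h : s i j) : least i = least j := by
    have : {k | s i k} = {k | s j k} := Set.ext fun k => ⟨s.trans' (s.symm' h), s.trans' h⟩
    simp only [least, this]
  have least_le (i : α) : least i ≤ i := WellFounded.min_le _ (s.refl' i)
  refine ⟨⟨least, fun i => ⟨least_le i, (least_congr (rel_least i)).symm⟩⟩, ?_⟩
  ext i j
  refine ⟨fun h : least i = least j => ?_, least_congr⟩
  exact s.trans' (rel_least i) (h ▸ s.symm' (rel_least j))

instance [Fintype α] [DecidableEq α] [LE α] [DecidableLE α] : Fintype (LeastRep α) :=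
  inferInstanceAs (Fintype {f : α → α // ∀ i, f i ≤ i ∧ f (f i) = f i})

end LeastRep

/-- The encoding of the 2-ramified partitions of `Fin n` by least representatives, with the finer
component first. -/
def LeastRepPair (n : ℕ) : Type :=
  {p : LeastRep (Fin n) × LeastRep (Fin n) // ∀ i j, p.1.1 i = p.1.1 j → p.2.1 i = p.2.1 j}

namespace LeastRepPair

variable {n : ℕ}

instance : Fintype (LeastRepPair n) :=
  inferInstanceAs (Fintype {p : LeastRep (Fin n) × LeastRep (Fin n) //
    ∀ i j, p.1.1 i = p.1.1 j → p.2.1 i = p.2.1 j})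

/-- The ramified partition with the given least representatives. -/
noncomputable def equivRamPart (n : ℕ) : LeastRepPair n ≃ RamPart n :=
  let e : LeastRep (Fin n) ≃ Setoid (Fin n) :=
    Equiv.ofBijective _ ⟨LeastRep.ker_injective, LeastRep.ker_surjective⟩
  (e.prodCongr e).subtypeEquiv fun _ => Iff.rfl

/-- The number of parts of the coarser component. -/
def numCoarse (p : LeastRepPair n) : ℕ :=
  (Finset.univ.image p.1.2.1).card

/-- The number of parts of the finer component inside the part of the coarser component with least
element `k`; it is `0` if `k` is not the least element of such a part. -/
def numFine (p : LeastRepPair n) (k : Fin n) : ℕ :=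
  (Finset.image p.1.1.1 {i | p.1.2.1 i = k}).card

theorem weight_equivRamPart {R : Type*} [CommRing R] (x y : R) (p : LeastRepPair n) :
    weight x y (equivRamPart n p) =
      (descPochhammer R p.numCoarse).eval x * ∏ k, (descPochhammer R (p.numFine k)).eval y := by
  have card_range : (Set.range p.1.2.1).ncard = p.numCoarse := by
    rw [numCoarse, ← Set.ncard_coe_finset, Finset.coe_image, Finset.coe_univ, Set.image_univ]
  have card_image (k : Fin n) : (p.1.1.1 '' (p.1.2.1 ⁻¹' {k})).ncard = p.numFine k := by
    rw [numFine, ← Set.ncard_coe_finset, Finset.coe_image, Finset.coe_filter_univ]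
    rfl
  rw [weight_eq_of_ker (u := p.1.1.1) (v := p.1.2.1) rfl rfl, card_range]
  simp only [card_image]

theorem det_gram_eq_prod (n : ℕ) :
    (gram n).det = (∏ p : LeastRepPair n, (descPochhammer _ p.numCoarse).eval (X 0)) *
      ∏ p : LeastRepPair n, ∏ k, (descPochhammer _ (p.numFine k)).eval (X 1) := by
  rw [det_gram, ← (equivRamPart n).prod_comp, ← Finset.prod_mul_distrib]
  exact Finset.prod_congr rfl fun p _ => weight_equivRamPart _ _ p

end LeastRepPair

section Three

variable {M : Type*} [CommMonoid M]

theorem prod_comp_eq_prod_map {ι κ : Type*} (F : κ → M) (s : Finset ι) (g : ι → κ) :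
    ∏ i ∈ s, F (g i) = ((s.val.map g).map F).prod := by
  rw [Multiset.map_map]
  rfl

theorem card_leastRepPair_three : Fintype.card (LeastRepPair 3) = 12 := by
  decide +kernel

theorem prod_numCoarse_three (F : ℕ → M) :
    ∏ p : LeastRepPair 3, F p.numCoarse = F 1 ^ 5 * F 2 ^ 6 * F 3 := by
  have counts : Finset.univ.val.map (LeastRepPair.numCoarse (n := 3)) =
      .replicate 5 1 + .replicate 6 2 + {3} := by
    decide +kernel
  rw [prod_comp_eq_prod_map F, counts]
  simp only [Multiset.map_add, Multiset.map_replicate, Multiset.map_singleton, Multiset.prod_add,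
    Multiset.prod_replicate, Multiset.prod_singleton]

theorem prod_numFine_three (F : ℕ → M) :
    ∏ p : LeastRepPair 3, ∏ k, F (p.numFine k) = F 0 ^ 16 * F 1 ^ 13 * F 2 ^ 6 * F 3 := by
  have counts : Finset.univ.val.map (fun q : LeastRepPair 3 × Fin 3 => q.1.numFine q.2) =
      .replicate 16 0 + .replicate 13 1 + .replicate 6 2 + {3} := by
    decide +kernel
  rw [← Fintype.prod_prod_type', prod_comp_eq_prod_map F _ fun q => _, counts]
  simp only [Multiset.map_add, Multiset.map_replicate, Multiset.map_singleton, Multiset.prod_add,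
    Multiset.prod_replicate, Multiset.prod_singleton]

end Three

end LeastRepresentatives

/-- a 3-element set has exactly twelve 2-ramified partitions, and
`det G_3 = Q₁¹² Q₂²⁰ (Q₁ − 2)(Q₂ − 2)(Q₁ − 1)⁷(Q₂ − 1)⁷` in `ℤ[Q₁,Q₂]`. -/
theorem gram_three_det :
    Nat.card (RamPart 3) = 12 ∧
    (gram 3).det =
      X 0 ^ 12 * X 1 ^ 20 * (X 0 - 2) * (X 1 - 2) * (X 0 - 1) ^ 7 * (X 1 - 1) ^ 7 := by
  constructor
  · rw [← Nat.card_congr (LeastRepPair.equivRamPart 3), Nat.card_eq_fintype_card,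
      card_leastRepPair_three]
  · rw [LeastRepPair.det_gram_eq_prod, prod_numCoarse_three (fun k => (descPochhammer _ k).eval _),
      prod_numFine_three (fun k => (descPochhammer _ k).eval _)]
    simp only [descPochhammer_eval_eq_prod_range, Finset.prod_range_succ, Finset.prod_range_zero,
      Nat.cast_zero, Nat.cast_one, Nat.cast_ofNat]
    ring

end RamifiedGram
end
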